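/- Let S and R be Coxeter generating sets of a group W. Suppose that for all s, s' ∈ S generating a finite subgroup (allowing s = s') there exist w ∈ W and r, r' ∈ R with {wsw⁻¹, ws'w⁻¹} = {r, r'}. Then for all r, r' ∈ R generating a finite subgroup there exist u ∈ W and s, s' ∈ S with {uru⁻¹, ur'u⁻¹} = {s, s'}. -/

import Mathlib

/-- A finite subset `S` of a group `W` is a *Coxeter generating set* if there is a Coxeter
matrix indexed by `S` and a Coxeter system for that matrix on `W` whose simple reflections
are exactly the elements of `S` (via the inclusion `S ⊆ W`). -/
def IsCoxeterGeneratingSet {W : Type*} [Group W] (S : Set W) : Prop :=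
  S.Finite ∧ ∃ (M : CoxeterMatrix ↥S) (cs : CoxeterSystem M W), ∀ s : S, cs.simple s = (s : W)

/-- Two elements are *adjacent* if they generate a finite subgroup. -/
def AdjacentElems {W : Type*} [Group W] (s s' : W) : Prop :=
  (Subgroup.closure {s, s'} : Set W).Finite

/-- Coxeter generating sets `S` and `R` are *angle-compatible* if every pair of elements
of `S` (allowing equal elements) generating a finite subgroup is conjugate to a pair of
elements of `R`. -/
def AngleCompatible {W : Type*} [Group W] (S R : Set W) : Prop :=
  ∀ s ∈ S, ∀ s' ∈ S, (Subgroup.closure {s, s'} : Set W).Finite →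
    ∃ w : W, ∃ r ∈ R, ∃ r' ∈ R, ({w * s * w⁻¹, w * s' * w⁻¹} : Set W) = {r, r'}

/-- `perpIn S J` is the set `J⊥` of elements of `S ∖ J` commuting with every element
of `J`. -/
def perpIn {W : Type*} [Group W] (S J : Set W) : Set W :=
  {t ∈ S \ J | ∀ j ∈ J, Commute t j}

/-- A set is *irreducible* if it cannot be partitioned into two nonempty subsets that
commute elementwise. -/
def IrreducibleSubset {W : Type*} [Group W] (J : Set W) : Prop :=
  ¬ ∃ K L : Set W, K.Nonempty ∧ L.Nonempty ∧ Disjoint K L ∧ K ∪ L = J ∧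
      ∀ k ∈ K, ∀ l ∈ L, Commute k l

/-- A subset `T` is *connected* in the adjacency graph if any two of its elements are
joined by a path inside `T` whose edges are adjacent pairs. -/
def ConnectedIn {W : Type*} [Group W] (T : Set W) : Prop :=
  ∀ a ∈ T, ∀ b ∈ T,
    Relation.ReflTransGen (fun x y => x ∈ T ∧ y ∈ T ∧ AdjacentElems x y) a b

/-- A Coxeter generating set `S` is *twist-rigid* if for every irreducible spherical subset
`J ⊆ S` the set `S ∖ (J ∪ J⊥)` is connected in the adjacency graph. -/
def IsTwistRigid {W : Type*} [Group W] (S : Set W) : Prop :=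
  ∀ J ⊆ S, IrreducibleSubset J → (Subgroup.closure J : Set W).Finite →
    ConnectedIn (S \ (J ∪ perpIn S J))

/-!
Angle-compatibility makes every element of `S` an `R`-reflection, and since `S` generates `W`, a
sign character of `(W, R)` shows that every element of `R` is conjugate to one of `S`. Hence all
elements of `R` are `S`-reflections. If `r, r'` in `R` are distinct and generate a finite group,
their walls cross, and both pass through a common finite residue of rank two: up to conjugacy
`r, r' ∈ ⟨s, s'⟩` with `⟨s, s'⟩` finite. By hypothesis `{s, s'}` is conjugate to some
`{r₁, r₁'} ⊆ R`, so `r, r'` are conjugated into the standard parabolic subgroup `⟨r₁, r₁'⟩` of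
`(W, R)`. Shortening the conjugator to a minimal coset representative sends `{r, r'}` onto
`{r₁, r₁'}`, which is conjugate to `{s, s'}`.

Walls are handled through the parity of the number of times a gallery crosses them.
-/

open Pointwise

section PairGenerated

variable {G : Type*} [Group G] {a b : G}

lemma exists_zpow_of_mem_closure_pair (ha : a * a = 1) (hb : b * b = 1) {x : G}
    (hx : x ∈ Subgroup.closure {a, b}) :
    ∃ n : ℤ, x = (a * b) ^ n ∨ x = (a * b) ^ n * a := by
  have ha_inv : a⁻¹ = a := inv_eq_of_mul_eq_one_left ha
  have hb_inv : b⁻¹ = b := inv_eq_of_mul_eq_one_left hb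
  have hflip : SemiconjBy a (a * b) (a * b)⁻¹ := by
    simp [SemiconjBy, ← mul_assoc, ha, ha_inv, hb_inv, mul_assoc b a a]
  have hb_eq : b = (a * b)⁻¹ * a := by simp [ha_inv, hb_inv, mul_assoc, ha]
  have ha_mul (n : ℤ) : a * (a * b) ^ n = (a * b) ^ (-n) * a := by
    rw [(hflip.zpow_right n).eq, inv_zpow']
  have hb_mul (n : ℤ) : b * (a * b) ^ n = (a * b) ^ (-1 - n) * a := by
    nth_rw 1 [hb_eq]
    rw [mul_assoc, ha_mul, ← mul_assoc, ← zpow_neg_one, ← zpow_add, ← sub_eq_add_neg]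
  have hword (y : G) (hy : y ∈ ({a, b} : Set G)) (n : ℤ) :
      ∃ m : ℤ, y * (a * b) ^ n = (a * b) ^ m * a := by
    rcases hy with rfl | rfl
    exacts [⟨_, ha_mul n⟩, ⟨_, hb_mul n⟩]
  have hpair (y : G) (hy : y ∈ ({a, b} : Set G)) (z : G)
      (hz : ∃ n : ℤ, z = (a * b) ^ n ∨ z = (a * b) ^ n * a) :
      ∃ n : ℤ, y * z = (a * b) ^ n ∨ y * z = (a * b) ^ n * a := by
    obtain ⟨n, hn⟩ := hz
    obtain ⟨m, hm⟩ := hword y hy n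
    refine ⟨m, hn.symm.imp (fun h ↦ ?_) fun h ↦ by rw [h, hm]⟩
    rw [h, ← mul_assoc, hm, mul_assoc, ha, mul_one]
  induction hx using Subgroup.closure_induction_left with
  | one => exact ⟨0, .inl (zpow_zero _).symm⟩
  | mul_left y hy z _ ih => exact hpair y hy z ih
  | inv_mul_cancel y hy z _ ih =>
    have hy_inv : y⁻¹ = y := by rcases hy with rfl | rfl <;> assumption
    rw [hy_inv]
    exact hpair y hy z ih

lemma finite_closure_pair (ha : a * a = 1) (hb : b * b = 1) (hab : IsOfFinOrder (a * b)) :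
    (Subgroup.closure {a, b} : Set G).Finite := by
  have hrot : (Subgroup.zpowers (a * b) : Set G).Finite := hab.finite_zpowers
  refine (hrot.union (hrot.image (· * a))).subset fun x hx ↦ ?_
  obtain ⟨n, rfl | rfl⟩ := exists_zpow_of_mem_closure_pair ha hb hx
  · exact .inl ⟨n, rfl⟩
  · exact .inr ⟨_, ⟨n, rfl⟩, rfl⟩

lemma isOfFinOrder_of_mem_of_finite {H : Subgroup G} (hH : (H : Set G).Finite) {x : G}
    (hx : x ∈ H) : IsOfFinOrder x :=
  have : Finite H := hH
  H.subtype.isOfFinOrder (isOfFinOrder_of_finite (⟨x, hx⟩ : H))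

lemma finite_closure_pair_of_mem (ha : a * a = 1) (hb : b * b = 1) {x y : G}
    (hx : x ∈ Subgroup.closure {a, b}) (hy : y ∈ Subgroup.closure {a, b})
    (hx1 : x ≠ 1) (hy1 : y ≠ 1) (hxy : x ≠ y)
    (hfin : (Subgroup.closure {x, y} : Set G).Finite) :
    (Subgroup.closure {a, b} : Set G).Finite := by
  refine finite_closure_pair ha hb ?_
  have hxH : x ∈ Subgroup.closure {x, y} := Subgroup.subset_closure (.inl rfl)
  have hyH : y ∈ Subgroup.closure {x, y} := Subgroup.subset_closure (.inr rfl)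
  have hrot {z : G} {n : ℤ} (hz : z ∈ Subgroup.closure {x, y}) (hz1 : z ≠ 1)
      (hzn : z = (a * b) ^ n) : IsOfFinOrder (a * b) := by
    have hn0 : n ≠ 0 := fun h ↦ hz1 (by rw [hzn, h, zpow_zero])
    obtain ⟨m, hm, hzm⟩ := isOfFinOrder_iff_zpow_eq_one.1 (isOfFinOrder_of_mem_of_finite hfin hz)
    exact isOfFinOrder_iff_zpow_eq_one.2 ⟨n * m, mul_ne_zero hn0 hm, by rw [zpow_mul, ← hzn, hzm]⟩
  obtain ⟨n, hxn | hxn⟩ := exists_zpow_of_mem_closure_pair ha hb hx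
  · exact hrot hxH hx1 hxn
  obtain ⟨m, hym | hym⟩ := exists_zpow_of_mem_closure_pair ha hb hy
  · exact hrot hyH hy1 hym
  have hdiv : x * y⁻¹ = (a * b) ^ (n - m) := by
    rw [hxn, hym, zpow_sub]
    group
  exact hrot (mul_mem hxH (inv_mem hyH)) (mt mul_inv_eq_one.1 hxy) hdiv

lemma conj_smul_pair (g a b : G) :
    MulAut.conj g • ({a, b} : Set G) = {g * a * g⁻¹, g * b * g⁻¹} := by
  rw [Set.smul_set_insert, Set.smul_set_singleton, MulAut.smul_def, MulAut.smul_def,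
    MulAut.conj_apply, MulAut.conj_apply]

end PairGenerated

lemma smul_set_eq_of_subset_smul {G α : Type*} [Group G] [MulAction G α] {g : G}
    (hg : IsOfFinOrder g) {A : Set α} (hA : A ⊆ g • A) : g • A = A := by
  have : Finite (Subgroup.zpowers g) := hg.finite_zpowers
  have : CovariantClass (Subgroup.zpowers g) (Set α) (· • ·) (· ≤ ·) :=
    ⟨fun _ _ _ ↦ Set.smul_set_mono⟩
  exact smul_eq_of_le_smul (g := (⟨g, Subgroup.mem_zpowers g⟩ : Subgroup.zpowers g)) hA

section Coxeter

open CoxeterSystem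

variable {B W : Type*} [Group W] {M : CoxeterMatrix B} (cs : CoxeterSystem M W)

section Crossing

open Classical in
/-- The action of a simple generator on pairs of an element of `W` and a parity: the generator
conjugates the element, and the parity flips when the element is the generator itself. -/
noncomputable def crossingStep (i : B) : Function.End (W × ZMod 2) := fun p ↦
  (cs.simple i * p.1 * cs.simple i, p.2 + if p.1 = cs.simple i then 1 else 0)

open Classical in
lemma prod_map_reverse_crossingStep (ω : List B) (x : W) (e : ZMod 2) :
    (ω.reverse.map (crossingStep cs)).prod (x, e) =
      ((cs.wordProd ω)⁻¹ * x * cs.wordProd ω, e + (cs.leftInvSeq ω).count x) := by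
  induction ω using List.reverseRecOn with
  | nil => simp [Function.End.one_def]
  | append_singleton ω i ih =>
    have hwall : (cs.wordProd ω)⁻¹ * x * cs.wordProd ω = cs.simple i ↔
        cs.wordProd ω * cs.simple i * (cs.wordProd ω)⁻¹ = x := by
      rw [mul_inv_eq_iff_eq_mul, mul_assoc, inv_mul_eq_iff_eq_mul, eq_comm]
    rw [List.reverse_concat', List.map_cons, List.prod_cons]
    change crossingStep cs i ((ω.reverse.map (crossingStep cs)).prod (x, e)) = _
    rw [ih, ← List.concat_eq_append, cs.leftInvSeq_concat, cs.wordProd_concat]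
    refine Prod.ext (by simp [crossingStep, mul_assoc]) ?_
    simp [crossingStep, hwall, List.count_singleton, add_assoc]

lemma prod_map_reverse_alternatingWord {A : Type*} [Monoid A] (f : B → A) (i j : B) (n : ℕ) :
    ((alternatingWord i j (2 * n)).reverse.map f).prod = (f j * f i) ^ n := by
  induction n with
  | zero => simp [alternatingWord]
  | succ n ih =>
    rw [Nat.mul_succ, alternatingWord_succ, alternatingWord_succ, pow_succ', ← ih]
    simp [mul_assoc]

open Classical in
lemma even_count_leftInvSeq_alternatingWord (i j : B) (x : W) :
    Even ((cs.leftInvSeq (alternatingWord i j (2 * M i j))).count x) := by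
  have hlis : cs.leftInvSeq (alternatingWord i j (2 * M i j)) =
      (List.range (2 * M i j)).map fun k ↦ cs.simple i * (cs.simple j * cs.simple i) ^ k := by
    refine List.ext_getElem (by simp) fun k hk _ ↦ ?_
    rw [cs.getElem_leftInvSeq_alternatingWord i j _ _ (by simpa using hk),
      cs.prod_alternatingWord_eq_mul_pow]
    simp [Nat.mul_add_div]
  rw [hlis, two_mul, List.range_add, List.map_append, List.map_map, List.count_append]
  simp [Function.comp_def, pow_add]

lemma isLiftable_crossingStep : M.IsLiftable (crossingStep cs) := by
  classical
  rintro i j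
  funext ⟨x, e⟩
  have hcount := even_count_leftInvSeq_alternatingWord cs j i x
  rw [← prod_map_reverse_alternatingWord, M.symmetric, prod_map_reverse_crossingStep,
    (ZMod.natCast_eq_zero_iff_even).2 hcount, cs.prod_alternatingWord_eq_mul_pow]
  simp [Function.End.one_def]

/-- The action of `W` on pairs of an element and a parity extending `crossingStep`. It makes the
parity of the crossings of a wall depend only on the end points of a gallery. -/
noncomputable def crossingAction : W →* Function.End (W × ZMod 2) :=
  cs.lift ⟨crossingStep cs, isLiftable_crossingStep cs⟩

/-- The parity of the number of times a gallery from `1` to `w` crosses the wall of the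
reflection `t`. -/
noncomputable def crossingParity (w t : W) : ZMod 2 := (crossingAction cs w⁻¹ (t, 0)).2

open Classical in
lemma crossingAction_inv_wordProd (ω : List B) (x : W) (e : ZMod 2) :
    crossingAction cs (cs.wordProd ω)⁻¹ (x, e) =
      ((cs.wordProd ω)⁻¹ * x * cs.wordProd ω, e + (cs.leftInvSeq ω).count x) := by
  have hsimple : crossingAction cs ∘ cs.simple = crossingStep cs :=
    funext (cs.lift_apply_simple (isLiftable_crossingStep cs))
  rw [← prod_map_reverse_crossingStep, ← cs.wordProd_reverse, wordProd, map_list_prod,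
    List.map_map, hsimple]

open Classical in
lemma crossingParity_wordProd (ω : List B) (t : W) :
    crossingParity cs (cs.wordProd ω) t = (cs.leftInvSeq ω).count t := by
  rw [crossingParity, crossingAction_inv_wordProd, zero_add]

lemma crossingParity_mul (u v t : W) :
    crossingParity cs (u * v) t = crossingParity cs u t + crossingParity cs v (u⁻¹ * t * u) := by
  classical
  obtain ⟨ω, rfl⟩ := cs.wordProd_surjective u
  obtain ⟨ψ, rfl⟩ := cs.wordProd_surjective v
  rw [crossingParity, mul_inv_rev, map_mul]
  change (crossingAction cs _ (crossingAction cs _ (t, 0))).2 = _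
  rw [crossingAction_inv_wordProd, crossingAction_inv_wordProd, crossingParity_wordProd,
    crossingParity_wordProd, zero_add]

@[simp]
lemma crossingParity_one (t : W) : crossingParity cs 1 t = 0 := by
  simpa using crossingParity_mul cs 1 1 t

lemma crossingParity_inv (w t : W) :
    crossingParity cs w⁻¹ t = crossingParity cs w (w * t * w⁻¹) := by
  have h := crossingParity_mul cs w w⁻¹ (w * t * w⁻¹)
  have hconj : w⁻¹ * (w * t * w⁻¹) * w = t := by group
  rw [mul_inv_cancel, crossingParity_one, hconj] at h
  exact (CharTwo.add_eq_zero.1 h.symm).symm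

lemma crossingParity_simple_self (i : B) : crossingParity cs (cs.simple i) (cs.simple i) = 1 := by
  classical
  simpa using crossingParity_wordProd cs [i] (cs.simple i)

lemma eq_simple_of_crossingParity_ne_zero {i : B} {t : W}
    (h : crossingParity cs (cs.simple i) t ≠ 0) : t = cs.simple i := by
  classical
  refine by_contra fun hne ↦ h ?_
  rw [← cs.wordProd_singleton, crossingParity_wordProd, cs.leftInvSeq_singleton,
    List.count_eq_zero_of_not_mem (by simpa only [List.mem_singleton] using hne), Nat.cast_zero]

lemma crossingParity_self {t : W} (ht : cs.IsReflection t) : crossingParity cs t t = 1 := by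
  obtain ⟨w, i, rfl⟩ := ht
  have hconj : w⁻¹ * (w * cs.simple i * w⁻¹) * w = cs.simple i := by group
  have hconj' : (w * cs.simple i)⁻¹ * (w * cs.simple i * w⁻¹) * (w * cs.simple i) =
      cs.simple i := by group
  rw [crossingParity_mul, crossingParity_mul, crossingParity_inv, hconj, hconj',
    crossingParity_simple_self, add_right_comm, CharTwo.add_self_eq_zero, zero_add]

lemma crossingParity_self_mul {t : W} (ht : cs.IsReflection t) (w : W) :
    crossingParity cs (t * w) t = crossingParity cs w t + 1 := by
  rw [crossingParity_mul, crossingParity_self cs ht, inv_mul_cancel, one_mul, add_comm]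

lemma isLeftInversion_of_crossingParity_ne_zero {w t : W} (h : crossingParity cs w t ≠ 0) :
    cs.IsLeftInversion w t := by
  classical
  obtain ⟨ω, hω, rfl⟩ := cs.exists_isReduced w
  refine cs.isLeftInversion_of_mem_leftInvSeq hω (by_contra fun hmem ↦ h ?_)
  rw [crossingParity_wordProd, List.count_eq_zero_of_not_mem hmem, Nat.cast_zero]

end Crossing

section Parabolic

/-- The standard parabolic subgroup generated by the simple reflections with index in `K`. -/
def standardParabolic (K : Set B) : Subgroup W := Subgroup.closure (cs.simple '' K)

variable {cs} {K : Set B}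

lemma simple_mem_standardParabolic {k : B} (hk : k ∈ K) :
    cs.simple k ∈ standardParabolic cs K :=
  Subgroup.subset_closure ⟨k, hk, rfl⟩

lemma standardParabolic_pair (j k : B) :
    standardParabolic cs {j, k} = Subgroup.closure {cs.simple j, cs.simple k} := by
  rw [standardParabolic, Set.image_pair]

lemma wordProd_mem_standardParabolic {κ : List B} (hκ : ∀ k ∈ κ, k ∈ K) :
    cs.wordProd κ ∈ standardParabolic cs K := by
  refine Subgroup.list_prod_mem _ fun x hx ↦ ?_
  obtain ⟨k, hk, rfl⟩ := List.mem_map.1 hx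
  exact simple_mem_standardParabolic (hκ k hk)

lemma exists_sublist_length_lt_of_not_nodup_leftInvSeq {ω : List B}
    (hω : ¬(cs.leftInvSeq ω).Nodup) :
    ∃ ω', ω'.Sublist ω ∧ ω'.length < ω.length ∧ cs.wordProd ω' = cs.wordProd ω := by
  obtain ⟨j, k, hjk, hk, heq⟩ : ∃ (j k : ℕ) (_ : j < k) (_ : k < ω.length),
      (cs.leftInvSeq ω).getD j 1 = (cs.leftInvSeq ω).getD k 1 := by
    simp only [List.nodup_iff_getElem?_ne_getElem?, not_forall, not_not] at hω
    obtain ⟨j, k, hjk, hk, heq⟩ := hω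
    exact ⟨j, k, hjk, by simpa using hk, by
      rw [List.getD_eq_getElem?_getD, List.getD_eq_getElem?_getD, heq]⟩
  have hwall : (cs.leftInvSeq (ω.eraseIdx k)).getD j 1 = (cs.leftInvSeq ω).getD j 1 := by
    rw [cs.getD_leftInvSeq, cs.getD_leftInvSeq, List.take_eraseIdx_eq_take_of_le _ _ _ hjk.le,
      List.getElem?_eraseIdx_of_lt hjk]
  refine ⟨(ω.eraseIdx k).eraseIdx j,
    ((ω.eraseIdx k).eraseIdx_sublist j).trans (ω.eraseIdx_sublist k), ?_, ?_⟩
  · exact ((ω.eraseIdx k).eraseIdx_sublist j).length_le.trans_lt <| by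
      rw [List.length_eraseIdx_of_lt hk]; lia
  · rw [← cs.getD_leftInvSeq_mul_wordProd, hwall, heq, ← cs.getD_leftInvSeq_mul_wordProd,
      ← mul_assoc, cs.getD_leftInvSeq_mul_self, one_mul]

variable (cs) in
lemma exists_sublist_nodup_leftInvSeq (ω : List B) :
    ∃ ω', ω'.Sublist ω ∧ cs.wordProd ω' = cs.wordProd ω ∧ (cs.leftInvSeq ω').Nodup := by
  by_cases hω : (cs.leftInvSeq ω).Nodup
  · exact ⟨ω, List.Sublist.refl ω, rfl, hω⟩
  · obtain ⟨ψ, hψω, hlt, hψ⟩ := exists_sublist_length_lt_of_not_nodup_leftInvSeq hω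
    obtain ⟨ω', hω'ψ, hω', hnodup⟩ := exists_sublist_nodup_leftInvSeq ψ
    exact ⟨ω', hω'ψ.trans hψω, hω'.trans hψ, hnodup⟩
termination_by ω.length
decreasing_by exact hlt

lemma exists_word_of_mem_standardParabolic {x : W} (hx : x ∈ standardParabolic cs K) :
    ∃ κ : List B, (∀ k ∈ κ, k ∈ K) ∧ cs.wordProd κ = x ∧ (cs.leftInvSeq κ).Nodup := by
  obtain ⟨ω, hω, rfl⟩ : ∃ ω : List B, (∀ k ∈ ω, k ∈ K) ∧ cs.wordProd ω = x := by
    induction hx using Subgroup.closure_induction'' with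
    | one => exact ⟨[], by simp⟩
    | mem _ hy =>
      obtain ⟨k, hk, rfl⟩ := hy
      exact ⟨[k], by simpa⟩
    | inv_mem _ hy =>
      obtain ⟨k, hk, rfl⟩ := hy
      exact ⟨[k], by simpa⟩
    | mul _ _ _ _ ih₁ ih₂ =>
      obtain ⟨ω₁, hω₁, rfl⟩ := ih₁
      obtain ⟨ω₂, hω₂, rfl⟩ := ih₂
      exact ⟨ω₁ ++ ω₂, List.forall_mem_append.2 ⟨hω₁, hω₂⟩, cs.wordProd_append ω₁ ω₂⟩
  obtain ⟨κ, hκω, hκ, hnodup⟩ := exists_sublist_nodup_leftInvSeq cs ω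
  exact ⟨κ, fun k hk ↦ hω k (hκω.subset hk), hκ, hnodup⟩

lemma mem_standardParabolic_of_crossingParity_ne_zero {p x : W}
    (hp : p ∈ standardParabolic cs K) (hx : crossingParity cs p x ≠ 0) :
    x ∈ standardParabolic cs K := by
  classical
  obtain ⟨κ, hκ, rfl, -⟩ := exists_word_of_mem_standardParabolic hp
  have hmem : x ∈ cs.leftInvSeq κ := by
    refine by_contra fun hmem ↦ hx ?_
    rw [crossingParity_wordProd, List.count_eq_zero_of_not_mem hmem, Nat.cast_zero]
  obtain ⟨j, hj, rfl⟩ := List.mem_iff_getElem.1 hmem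
  rw [cs.getElem_leftInvSeq κ j (by simpa using hj)]
  have htake : cs.wordProd (κ.take j) ∈ standardParabolic cs K :=
    wordProd_mem_standardParabolic fun k hk ↦ hκ k (List.mem_of_mem_take hk)
  exact mul_mem (mul_mem htake (simple_mem_standardParabolic (hκ _ (List.getElem_mem _))))
    (inv_mem htake)

lemma exists_crossingParity_simple_eq_one {x : W} (hx : x ∈ standardParabolic cs K)
    (hx1 : x ≠ 1) : ∃ k ∈ K, crossingParity cs x (cs.simple k) = 1 := by
  classical
  obtain ⟨_ | ⟨k, κ⟩, hκ, rfl, hnodup⟩ := exists_word_of_mem_standardParabolic hx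
  · exact absurd cs.wordProd_nil hx1
  refine ⟨k, hκ k List.mem_cons_self, ?_⟩
  rw [crossingParity_wordProd, List.count_eq_one_of_mem hnodup (by simp [leftInvSeq]),
    Nat.cast_one]

variable (cs K) in
/-- `v` has minimal length in its coset `v W_K` of the standard parabolic subgroup of `K`. -/
def IsMinCosetRep (v : W) : Prop :=
  ∀ p ∈ standardParabolic cs K, cs.length v ≤ cs.length (v * p)

variable (cs K) in
lemma exists_isMinCosetRep_mul (y : W) :
    ∃ p ∈ standardParabolic cs K, IsMinCosetRep cs K (y * p) := by
  obtain ⟨p, hp, hmin⟩ := exists_minimalFor_of_wellFoundedLT (· ∈ standardParabolic cs K)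
    (fun p ↦ cs.length (y * p)) ⟨1, one_mem _⟩
  refine ⟨p, hp, fun q hq ↦ ?_⟩
  have hle := hmin (mul_mem hp hq)
  rw [mul_assoc]
  exact (le_total _ _).elim id hle

lemma IsMinCosetRep.crossingParity_conj_eq_zero {v y : W} (hv : IsMinCosetRep cs K v)
    (hy : y ∈ standardParabolic cs K) : crossingParity cs v (v * y * v⁻¹) = 0 := by
  refine by_contra fun h ↦ (hv y hy).not_gt ?_
  simpa using (isLeftInversion_of_crossingParity_ne_zero cs h).2

-- Writing `x = v⁻¹ s_i v`, the first letter `s_k` of a suitable word for `x` is `x` itself: count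
-- the crossings of the wall of `v s_k v⁻¹` by galleries to `v x = s_i v`, to which `v` adds none.
lemma IsMinCosetRep.exists_simple_eq {v : W} (hv : IsMinCosetRep cs K v) {i : B}
    (hi : v⁻¹ * cs.simple i * v ∈ standardParabolic cs K) :
    ∃ k ∈ K, v⁻¹ * cs.simple i * v = cs.simple k := by
  set x := v⁻¹ * cs.simple i * v with hx
  have hvx : v * x = cs.simple i * v := by rw [hx]; group
  have hx1 : x ≠ 1 := fun h ↦ cs.length_simple_mul_ne v i (by rw [← hvx, h, mul_one])
  obtain ⟨k, hk, hkx⟩ := exists_crossingParity_simple_eq_one hi hx1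
  have hsk := simple_mem_standardParabolic (cs := cs) hk
  refine ⟨k, hk, ?_⟩
  have hconj : v⁻¹ * (v * cs.simple k * v⁻¹) * v = cs.simple k := by group
  have hconj' : (cs.simple i)⁻¹ * (v * cs.simple k * v⁻¹) * cs.simple i =
      v * (x * cs.simple k * x⁻¹) * v⁻¹ := by
    rw [hx]; simp [mul_assoc]
  have hcross : crossingParity cs (cs.simple i) (v * cs.simple k * v⁻¹) = 1 := by
    have h := crossingParity_mul cs v x (v * cs.simple k * v⁻¹)
    rw [hvx, crossingParity_mul, hconj, hconj', hv.crossingParity_conj_eq_zero hsk, hkx,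
      hv.crossingParity_conj_eq_zero (mul_mem (mul_mem hi hsk) (inv_mem hi))] at h
    simpa using h
  rw [hx, ← eq_simple_of_crossingParity_ne_zero cs (hcross ▸ one_ne_zero), hconj]

lemma exists_conj_smul_simple_subset {I : Set B} {u : W}
    (hu : MulAut.conj u • (cs.simple '' I) ⊆ (standardParabolic cs K : Set W)) :
    ∃ z : W, MulAut.conj z • (cs.simple '' I) ⊆ cs.simple '' K := by
  obtain ⟨p, hp, hmin⟩ := exists_isMinCosetRep_mul cs K u⁻¹
  refine ⟨(u⁻¹ * p)⁻¹, ?_⟩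
  rintro _ ⟨_, ⟨i, hi, rfl⟩, rfl⟩
  have hui : u * cs.simple i * u⁻¹ ∈ standardParabolic cs K := hu ⟨_, ⟨i, hi, rfl⟩, rfl⟩
  obtain ⟨k, hk, hik⟩ := hmin.exists_simple_eq (i := i) <| by
    simpa [mul_assoc] using mul_mem (mul_mem (inv_mem hp) hui) hp
  exact ⟨k, hk, by simpa [mul_assoc] using hik.symm⟩

end Parabolic

section HalfSpace

/-- One of the two sides of the wall of a reflection `t`: the elements `w` such that galleries
from `1` to `w` cross the wall with parity `a`. -/
def halfSpace (t : W) (a : ZMod 2) : Set W := {w | crossingParity cs w t = a}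

variable {cs} {t t' : W}

lemma compl_halfSpace (t : W) (a : ZMod 2) : (halfSpace cs t a)ᶜ = halfSpace cs t (a + 1) := by
  have hparity : ∀ b c : ZMod 2, b ≠ c ↔ b = c + 1 := by decide
  ext w
  exact hparity _ _

lemma smul_halfSpace (ht : cs.IsReflection t) (a : ZMod 2) :
    t • halfSpace cs t a = (halfSpace cs t a)ᶜ := by
  have hparity : ∀ b c : ZMod 2, b + 1 = c ↔ b = c + 1 := by decide
  ext w
  rw [compl_halfSpace, Set.mem_smul_set_iff_inv_smul_mem, ht.inv, smul_eq_mul]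
  simp only [halfSpace, Set.mem_ofPred_eq, crossingParity_self_mul cs ht, hparity]

lemma crossingParity_mul_simple_ne_iff {u : W} {i : B} :
    crossingParity cs (u * cs.simple i) t ≠ crossingParity cs u t ↔
      u⁻¹ * t * u = cs.simple i := by
  rw [crossingParity_mul, Ne, add_eq_left]
  refine ⟨eq_simple_of_crossingParity_ne_zero cs, fun h ↦ ?_⟩
  rw [h, crossingParity_simple_self]
  exact one_ne_zero

lemma eq_of_halfSpace_eq (ht : cs.IsReflection t) {a a' : ZMod 2}
    (h : halfSpace cs t a = halfSpace cs t' a') : t = t' := by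
  have hparity : ∀ b c d : ZMod 2, b ≠ c ↔ ¬(b = d ↔ c = d) := by decide
  obtain ⟨u, i, htu⟩ := ht
  have hcross : u⁻¹ * t * u = cs.simple i := by rw [htu]; group
  have hcross' : u⁻¹ * t' * u = cs.simple i := by
    rw [← crossingParity_mul_simple_ne_iff, hparity _ _ a']
    rw [← crossingParity_mul_simple_ne_iff, hparity _ _ a] at hcross
    exact (iff_congr (Set.ext_iff.1 h _) (Set.ext_iff.1 h _)).not.1 hcross
  exact mul_left_cancel (mul_right_cancel (hcross.trans hcross'.symm))

lemma nonempty_halfSpace_inter (ht : cs.IsReflection t) (ht' : cs.IsReflection t')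
    (hne : t ≠ t') (hfin : IsOfFinOrder (t * t')) (a a' : ZMod 2) :
    (halfSpace cs t a ∩ halfSpace cs t' a').Nonempty := by
  -- If `H = halfSpace cs t a` and `H' = halfSpace cs t' a'` were disjoint, then we would have
  -- `H' ⊆ Hᶜ ⊆ (t * t') • H'`. As `t * t'` has finite order, both inclusions are equalities,
  -- so `Hᶜ = H'` and the two walls coincide.
  rw [← Set.not_disjoint_iff_nonempty_inter]
  intro hdisj
  have hcompl : (halfSpace cs t a)ᶜ ⊆ (t * t') • halfSpace cs t' a' := by
    rw [← smul_halfSpace ht, mul_smul, smul_halfSpace ht', Set.smul_set_subset_smul_set_iff]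
    exact hdisj.subset_compl_right
  have hfix : (t * t') • halfSpace cs t' a' = halfSpace cs t' a' :=
    smul_set_eq_of_subset_smul hfin (hdisj.subset_compl_left.trans hcompl)
  refine hne (eq_of_halfSpace_eq ht (a := a + 1) (a' := a') ?_)
  rw [← compl_halfSpace]
  exact (hcompl.trans_eq hfix).antisymm hdisj.subset_compl_left

lemma exists_inv_mul_mul_eq_simple_of_crossingParity {w₁ w₂ : W}
    (h : crossingParity cs w₁ t ≠ crossingParity cs w₂ t)
    (h' : crossingParity cs w₁ t' = crossingParity cs w₂ t') :
    ∃ (x : W) (i : B), x⁻¹ * t * x = cs.simple i ∧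
      crossingParity cs x t' = crossingParity cs w₁ t' := by
  classical
  obtain ⟨ω, hω, hωw⟩ := cs.exists_isReduced (w₁⁻¹ * w₂)
  have hparity (y : W) : crossingParity cs w₂ y =
      crossingParity cs w₁ y + (cs.leftInvSeq ω).count (w₁⁻¹ * y * w₁) := by
    rw [← crossingParity_wordProd, ← hωw, ← crossingParity_mul, mul_inv_cancel_left]
  have hmem : w₁⁻¹ * t * w₁ ∈ cs.leftInvSeq ω := by
    refine by_contra fun hmem ↦ h ?_
    rw [hparity, List.count_eq_zero_of_not_mem hmem, Nat.cast_zero, add_zero]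
  have hnot_mem : w₁⁻¹ * t' * w₁ ∉ cs.leftInvSeq ω := fun hmem ↦ by
    rw [hparity, List.count_eq_one_of_mem hω.nodup_leftInvSeq hmem] at h'
    simp at h'
  obtain ⟨j, hj, hjt⟩ := List.mem_iff_getElem.1 hmem
  rw [cs.getElem_leftInvSeq ω j (by simpa using hj)] at hjt
  refine ⟨w₁ * cs.wordProd (ω.take j), ω[j]'(by simpa using hj), ?_, ?_⟩
  · have ht : t = w₁ * (cs.wordProd (ω.take j) * cs.simple (ω[j]'(by simpa using hj)) *
        (cs.wordProd (ω.take j))⁻¹) * w₁⁻¹ := by rw [hjt]; group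
    rw [ht]
    group
  · rw [crossingParity_mul, crossingParity_wordProd, cs.leftInvSeq_take,
      List.count_eq_zero_of_not_mem fun hmem ↦ hnot_mem (List.mem_of_mem_take hmem),
      Nat.cast_zero, add_zero]

lemma exists_inv_mul_mul_eq_simple (ht : cs.IsReflection t) (ht' : cs.IsReflection t')
    (hne : t ≠ t') (hfin : IsOfFinOrder (t * t')) (a' : ZMod 2) :
    ∃ (x : W) (i : B), x⁻¹ * t * x = cs.simple i ∧ crossingParity cs x t' = a' := by
  obtain ⟨w₁, h₁, h₁'⟩ := nonempty_halfSpace_inter ht ht' hne hfin 0 a'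
  obtain ⟨w₂, h₂, h₂'⟩ := nonempty_halfSpace_inter ht ht' hne hfin 1 a'
  have h : crossingParity cs w₁ t ≠ crossingParity cs w₂ t := h₁.trans_ne (h₂ ▸ zero_ne_one)
  obtain ⟨x, i, hx, hx'⟩ := exists_inv_mul_mul_eq_simple_of_crossingParity h (h₁'.trans h₂'.symm)
  exact ⟨x, i, hx, hx'.trans h₁'⟩

lemma exists_conj_mem_standardParabolic_pair {w w' : W} {i i' : B}
    (hw : w⁻¹ * t * w = cs.simple i) (hw' : w'⁻¹ * t * w' = cs.simple i')
    (hne : crossingParity cs w t' ≠ crossingParity cs w' t') :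
    ∃ (u : W) (j k : B), u⁻¹ * t * u ∈ standardParabolic cs {j, k} ∧
      u⁻¹ * t' * u ∈ standardParabolic cs {j, k} := by
  -- Walk from `w` to `w'` along the wall of `t`, each step crossing a rank-two residue that meets
  -- this wall. The wall of `t'` separates the ends of some step and so meets its residue too.
  have hv1 : w'⁻¹ * w ≠ 1 := fun h ↦ hne (by rw [inv_mul_eq_one.1 h])
  obtain ⟨i₁, hi₁⟩ := cs.exists_rightDescent_of_ne_one hv1
  obtain ⟨p, hp, hmin⟩ := exists_isMinCosetRep_mul cs {i, i₁} (w'⁻¹ * w)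
  have hi : cs.simple i ∈ standardParabolic cs {i, i₁} := simple_mem_standardParabolic (by simp)
  have hi₁' : cs.simple i₁ ∈ standardParabolic cs {i, i₁} := simple_mem_standardParabolic (by simp)
  by_cases hsep : crossingParity cs (w * p) t' = crossingParity cs w t'
  · have hlt : cs.length (w'⁻¹ * (w * p)) < cs.length (w'⁻¹ * w) := by
      have hle := hmin _ (mul_mem (inv_mem hp) hi₁')
      rw [← mul_assoc, mul_inv_cancel_right, mul_assoc] at hle
      exact hle.trans_lt hi₁
    have hconj : (w'⁻¹ * w * p)⁻¹ * cs.simple i' * (w'⁻¹ * w * p) = p⁻¹ * cs.simple i * p := by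
      rw [← hw, ← hw']
      group
    obtain ⟨k, -, hk⟩ := hmin.exists_simple_eq (i := i') <| by
      rw [hconj]
      exact mul_mem (mul_mem (inv_mem hp) hi) hp
    refine exists_conj_mem_standardParabolic_pair (w := w * p) (i := k) ?_ hw' (hsep ▸ hne)
    rw [← hk, hconj, ← hw]
    group
  · refine ⟨w, i, i₁, hw ▸ hi, mem_standardParabolic_of_crossingParity_ne_zero hp fun h ↦ hsep ?_⟩
    rw [crossingParity_mul, h, add_zero]
termination_by cs.length (w'⁻¹ * w)
decreasing_by exact hlt

lemma exists_conj_smul_pair_subset_closure_simple (ht : cs.IsReflection t)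
    (ht' : cs.IsReflection t') (hne : t ≠ t')
    (hfin : (Subgroup.closure {t, t'} : Set W).Finite) :
    ∃ (u : W) (j k : B),
      MulAut.conj u • ({t, t'} : Set W) ⊆ Subgroup.closure {cs.simple j, cs.simple k} ∧
        (Subgroup.closure {cs.simple j, cs.simple k} : Set W).Finite := by
  have hord : IsOfFinOrder (t * t') := isOfFinOrder_of_mem_of_finite hfin
    (mul_mem (Subgroup.subset_closure (.inl rfl)) (Subgroup.subset_closure (.inr rfl)))
  obtain ⟨w, i, hw, hwt'⟩ := exists_inv_mul_mul_eq_simple ht ht' hne hord 0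
  obtain ⟨w', i', hw', hwt''⟩ := exists_inv_mul_mul_eq_simple ht ht' hne hord 1
  obtain ⟨u, j, k, hu, hu'⟩ := exists_conj_mem_standardParabolic_pair (t' := t') hw hw' <|
    hwt'.trans_ne (hwt'' ▸ zero_ne_one)
  rw [standardParabolic_pair] at hu hu'
  have hconj : MulAut.conj u⁻¹ • ({t, t'} : Set W) = {u⁻¹ * t * u, u⁻¹ * t' * u} := by
    rw [conj_smul_pair, inv_inv]
  have hfin_conj : (Subgroup.closure {u⁻¹ * t * u, u⁻¹ * t' * u} : Set W).Finite := by
    rw [← hconj, ← Subgroup.smul_closure]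
    exact hfin.smul_set
  have hne_one {x : W} (hx : cs.IsReflection x) : u⁻¹ * x * u ≠ 1 := by
    intro h
    have hodd := (hx.conj u⁻¹).odd_length
    simp [h] at hodd
  refine ⟨u⁻¹, j, k, hconj ▸ Set.pair_subset hu hu', ?_⟩
  exact finite_closure_pair_of_mem (cs.simple_mul_simple_self j) (cs.simple_mul_simple_self k)
    hu hu' (hne_one ht) (hne_one ht') (by simpa using hne) hfin_conj

end HalfSpace

section Conjugacy

lemma isConj_simple_of_odd {i j : B} (h : Odd (M i j)) : IsConj (cs.simple i) (cs.simple j) := by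
  obtain ⟨m, hm⟩ := h
  refine isConj_iff.2 ⟨cs.wordProd (alternatingWord i j (2 * m)), mul_inv_eq_iff_eq_mul.2 ?_⟩
  have hbraid := cs.wordProd_braidWord_eq j i
  rw [braidWord, braidWord, M.symmetric j i, hm, alternatingWord_succ, alternatingWord_succ',
    if_pos (even_two_mul m), cs.wordProd_concat, cs.wordProd_cons] at hbraid
  exact hbraid

-- Otherwise the character of `W` that is `-1` exactly on the simple reflections conjugate to
-- `cs.simple i` would be trivial on `T`.
lemma exists_mem_isConj_simple {T : Set W} (hT : Subgroup.closure T = ⊤)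
    (hrefl : ∀ t ∈ T, cs.IsReflection t) (i : B) : ∃ t ∈ T, IsConj t (cs.simple i) := by
  classical
  by_contra! hnot
  let sign (j : B) : ℤˣ := if IsConj (cs.simple j) (cs.simple i) then -1 else 1
  have hsign : M.IsLiftable sign := fun j k ↦ by
    by_cases hodd : Odd (M j k)
    · have hjk := isConj_simple_of_odd cs hodd
      have hsign_eq : sign j = sign k := if_congr ⟨hjk.symm.trans, hjk.trans⟩ rfl rfl
      rw [hsign_eq, Int.units_mul_self, one_pow]
    · obtain ⟨m, hm⟩ := Nat.not_odd_iff_even.1 hodd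
      rw [hm, ← two_mul, pow_mul, Int.units_sq, one_pow]
  let χ : W →* ℤˣ := cs.lift ⟨sign, hsign⟩
  have hχ (j : B) : χ (cs.simple j) = sign j := cs.lift_apply_simple hsign j
  have hχ_one : χ = 1 := by
    refine MonoidHom.eq_of_eqOn_dense hT fun t ht ↦ ?_
    obtain ⟨w, j, rfl⟩ := hrefl t ht
    have hconj : IsConj (cs.simple j) (w * cs.simple j * w⁻¹) := isConj_iff.2 ⟨w, rfl⟩
    rw [map_mul, map_mul, map_inv, mul_inv_cancel_comm, hχ, MonoidHom.one_apply]
    exact if_neg fun hj ↦ hnot _ ht (hconj.symm.trans hj)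
  have hχi : χ (cs.simple i) = -1 := (hχ i).trans (if_pos (IsConj.refl _))
  rw [hχ_one] at hχi
  simp at hχi

end Conjugacy

end Coxeter

section AngleCompatible

lemma IsCoxeterGeneratingSet.exists_range_simple_eq.{u} {W : Type u} [Group W] {S : Set W}
    (hS : IsCoxeterGeneratingSet S) :
    ∃ (B : Type u) (M : CoxeterMatrix B) (cs : CoxeterSystem M W), Set.range cs.simple = S := by
  obtain ⟨-, M, cs, hcs⟩ := hS
  exact ⟨S, M, cs, by rw [funext hcs, Subtype.range_coe]⟩

variable {B C W : Type*} [Group W] {M : CoxeterMatrix B} {N : CoxeterMatrix C}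
  {cS : CoxeterSystem M W} {cR : CoxeterSystem N W}

lemma AngleCompatible.isReflection_simple
    (h : AngleCompatible (Set.range cS.simple) (Set.range cR.simple)) (i : B) :
    cR.IsReflection (cS.simple i) := by
  have hfin : (Subgroup.closure {cS.simple i, cS.simple i} : Set W).Finite :=
    finite_closure_pair (cS.simple_mul_simple_self i) (cS.simple_mul_simple_self i) <| by
      rw [cS.simple_mul_simple_self]
      exact IsOfFinOrder.one
  obtain ⟨w, _, ⟨k, rfl⟩, _, ⟨l, rfl⟩, hw⟩ := h _ ⟨i, rfl⟩ _ ⟨i, rfl⟩ hfin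
  have hk : cR.simple k = w * cS.simple i * w⁻¹ := by
    have hmem : cR.simple k ∈ ({cR.simple k, cR.simple l} : Set W) := .inl rfl
    rwa [← hw, Set.pair_eq_singleton] at hmem
  exact ⟨w⁻¹, k, by rw [hk]; group⟩

lemma AngleCompatible.exists_isConj_simple
    (h : AngleCompatible (Set.range cS.simple) (Set.range cR.simple)) (k : C) :
    ∃ i, IsConj (cR.simple k) (cS.simple i) := by
  obtain ⟨_, ⟨i, rfl⟩, hi⟩ := exists_mem_isConj_simple cR
    cS.subgroup_closure_range_simple (Set.forall_mem_range.2 h.isReflection_simple) k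
  exact ⟨i, hi.symm⟩

lemma AngleCompatible.exists_conj_smul_pair_simple_eq
    (h : AngleCompatible (Set.range cS.simple) (Set.range cR.simple)) {k l : C}
    (hne : cR.simple k ≠ cR.simple l)
    (hfin : (Subgroup.closure {cR.simple k, cR.simple l} : Set W).Finite) :
    ∃ (u : W) (i j : B), MulAut.conj u • ({cR.simple k, cR.simple l} : Set W) =
      {cS.simple i, cS.simple j} := by
  have hrefl (m : C) : cS.IsReflection (cR.simple m) := by
    obtain ⟨i, hi⟩ := h.exists_isConj_simple m
    obtain ⟨w, hw⟩ := isConj_iff.1 hi.symm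
    exact ⟨w, i, hw.symm⟩
  obtain ⟨u, i, j, hu, hij⟩ :=
    exists_conj_smul_pair_subset_closure_simple (hrefl k) (hrefl l) hne hfin
  obtain ⟨w, _, ⟨k', rfl⟩, _, ⟨l', rfl⟩, hw⟩ := h _ ⟨i, rfl⟩ _ ⟨j, rfl⟩ hij
  rw [← conj_smul_pair] at hw
  have hwu : MulAut.conj (w * u) • (cR.simple '' {k, l}) ⊆
      (standardParabolic cR {k', l'} : Set W) := by
    rw [standardParabolic_pair, ← hw, ← Subgroup.smul_closure, Subgroup.coe_pointwise_smul,
      Set.image_pair, map_mul, mul_smul]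
    exact Set.smul_set_mono hu
  obtain ⟨z, hz⟩ := exists_conj_smul_simple_subset hwu
  rw [Set.image_pair, Set.image_pair] at hz
  have hz_eq : MulAut.conj z • ({cR.simple k, cR.simple l} : Set W) =
      {cR.simple k', cR.simple l'} := by
    refine Set.eq_of_subset_of_ncard_le hz ?_ (Set.toFinite _)
    rw [Set.ncard_smul_set, Set.ncard_pair hne]
    exact (Set.ncard_insert_le _ _).trans_eq (by rw [Set.ncard_singleton])
  refine ⟨w⁻¹ * z, i, j, ?_⟩
  rw [map_mul, mul_smul, hz_eq, ← hw, map_inv, inv_smul_smul]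

end AngleCompatible

theorem angle_compatibility_symm_general {B C W : Type*} [Group W] {M : CoxeterMatrix B}
    {N : CoxeterMatrix C} (cS : CoxeterSystem M W) (cR : CoxeterSystem N W)
    (h : AngleCompatible (Set.range cS.simple) (Set.range cR.simple)) :
    AngleCompatible (Set.range cR.simple) (Set.range cS.simple) := by
  rintro _ ⟨k, rfl⟩ _ ⟨l, rfl⟩ hfin
  by_cases hkl : cR.simple k = cR.simple l
  · obtain ⟨i, hi⟩ := h.exists_isConj_simple k
    obtain ⟨u, hu⟩ := isConj_iff.1 hi
    exact ⟨u, _, ⟨i, rfl⟩, _, ⟨i, rfl⟩, by rw [← hkl, hu]⟩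
  · obtain ⟨u, i, j, hu⟩ := h.exists_conj_smul_pair_simple_eq hkl hfin
    exact ⟨u, _, ⟨i, rfl⟩, _, ⟨j, rfl⟩, by rw [← conj_smul_pair, hu]⟩

/-- Angle-compatibility of Coxeter generating sets is symmetric. -/
theorem angle_compatibility_symm
    {W : Type*} [Group W] (S R : Set W)
    (hS : IsCoxeterGeneratingSet S) (hR : IsCoxeterGeneratingSet R)
    (h : ∀ s ∈ S, ∀ s' ∈ S, (Subgroup.closure {s, s'} : Set W).Finite →
      ∃ w : W, ∃ r ∈ R, ∃ r' ∈ R, ({w * s * w⁻¹, w * s' * w⁻¹} : Set W) = {r, r'}) :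
    ∀ r ∈ R, ∀ r' ∈ R, (Subgroup.closure {r, r'} : Set W).Finite →
      ∃ u : W, ∃ s ∈ S, ∃ s' ∈ S, ({u * r * u⁻¹, u * r' * u⁻¹} : Set W) = {s, s'} := by
  obtain ⟨_, _, cS, rfl⟩ := hS.exists_range_simple_eq
  obtain ⟨_, _, cR, rfl⟩ := hR.exists_range_simple_eq
  exact angle_compatibility_symm_general cS cR h
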